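/- Fix an integer d ≥ 1. For every g ∈ G there exist a unique x ∈ 𝒳_d and a unique y ∈ 𝒴_d(x) such that g = xy; moreover x and y commute. (This is the d-decomposition of g into its d-part x and d-regular part y.) -/

import Mathlib

open Polynomial

/-- For `g ∈ GL(V)` with `n = dim V`, the subspace `V_g = range((g - 1)^n)`. -/
noncomputable def primaryRange {F V : Type} [Field F] [AddCommGroup V] [Module F V]
    (g : (Module.End F V)ˣ) : Submodule F V :=
  LinearMap.range (((g : Module.End F V) - 1) ^ Module.finrank F V)

/-- For `g ∈ GL(V)` with `n = dim V`, the subspace `V_g⁰ = ker((g - 1)^n)`. -/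
noncomputable def primaryKer {F V : Type} [Field F] [AddCommGroup V] [Module F V]
    (g : (Module.End F V)ˣ) : Submodule F V :=
  LinearMap.ker (((g : Module.End F V) - 1) ^ Module.finrank F V)

/-- The set `𝒳_d` of `d`-elements of `GL(V)`: those `g` fixing `V_g⁰` pointwise such
that every monic irreducible factor of the characteristic polynomial of `g` other
than `X - 1` has degree divisible by `d`. -/
noncomputable def dElements (F V : Type) [Field F] [AddCommGroup V] [Module F V]
    [FiniteDimensional F V] (d : ℕ) : Set (Module.End F V)ˣ :=
  {g | (∀ v ∈ primaryKer g, (g : Module.End F V) v = v) ∧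
    ∀ f : Polynomial F, f.Monic → Irreducible f →
      f ∣ LinearMap.charpoly (g : Module.End F V) → f ≠ X - 1 → d ∣ f.natDegree}

/-- For `x ∈ 𝒳_d`, the set `𝒴_d(x)`: those `y ∈ GL(V)` fixing `V_x` pointwise,
mapping `V_x⁰` into itself, and such that every monic irreducible factor of the
characteristic polynomial of `y` other than `X - 1` has degree not divisible by `d`. -/
noncomputable def dRegular (F V : Type) [Field F] [AddCommGroup V] [Module F V]
    [FiniteDimensional F V] (d : ℕ) (x : (Module.End F V)ˣ) :
    Set (Module.End F V)ˣ :=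
  {y | (∀ v ∈ primaryRange x, (y : Module.End F V) v = v) ∧
    (∀ v ∈ primaryKer x, (y : Module.End F V) v ∈ primaryKer x) ∧
    ∀ f : Polynomial F, f.Monic → Irreducible f →
      f ∣ LinearMap.charpoly (y : Module.End F V) → f ≠ X - 1 → ¬ d ∣ f.natDegree}

section PolynomialFactors

variable {F : Type*} [Field F]

/-- Two polynomials are coprime if a predicate holds for all monic irreducible factors of the
first and for no monic irreducible factor of the second. -/
theorem Polynomial.isCoprime_of_forall_monic_irreducible {P : F[X] → Prop} {a b : F[X]}
    (hb0 : b ≠ 0) (hb : ∀ f : F[X], f.Monic → Irreducible f → f ∣ b → P f)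
    (ha : ∀ f : F[X], f.Monic → Irreducible f → f ∣ a → ¬ P f) : IsCoprime b a := by
  classical
  refine isCoprime_of_irreducible_dvd (fun h => hb0 h.1) fun z hz hzb hza => ?_
  have hm : (normalize z).Monic := monic_normalize hz.ne_zero
  have hi : Irreducible (normalize z) := (normalize_associated z).symm.irreducible hz
  exact ha _ hm hi (normalize_dvd_iff.2 hza) (hb _ hm hi (normalize_dvd_iff.2 hzb))

/-- A nonzero polynomial splits according to a predicate on its monic irreducible factors. -/
theorem Polynomial.exists_mul_of_monic_irreducible_predicate (P : F[X] → Prop) (p : F[X])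
    (hp : p ≠ 0) : ∃ b a : F[X], p = b * a ∧
      (∀ f : F[X], f.Monic → Irreducible f → f ∣ b → P f) ∧
      (∀ f : F[X], f.Monic → Irreducible f → f ∣ a → ¬ P f) := by
  classical
  induction p using UniqueFactorizationMonoid.induction_on_prime with
  | h₁ => exact absurd rfl hp
  | h₂ u hu =>
    refine ⟨u, 1, (mul_one u).symm, fun f _ hf hfu => ?_, fun f _ hf hfu => ?_⟩
    · exact absurd (isUnit_of_dvd_unit hfu hu) hf.not_isUnit
    · exact absurd (isUnit_of_dvd_one hfu) hf.not_isUnit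
  | h₃ c z hc hz ih =>
    obtain ⟨b, a, rfl, hb, ha⟩ := ih hc
    have key : ∀ f : F[X], f.Monic → Irreducible f → f ∣ z → f = normalize z := by
      intro f hm hf hfz
      exact eq_of_monic_of_associated hm (monic_normalize hz.ne_zero)
        ((hf.associated_of_dvd hz.irreducible hfz).trans (normalize_associated z).symm)
    by_cases h : P (normalize z)
    · refine ⟨z * b, a, (mul_assoc _ _ _).symm, fun f hm hf hfb => ?_, ha⟩
      rcases hf.prime.dvd_or_dvd hfb with h1 | h1
      · rwa [key f hm hf h1]
      · exact hb f hm hf h1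
    · refine ⟨b, z * a, mul_left_comm _ _ _, hb, fun f hm hf hfa => ?_⟩
      rcases hf.prime.dvd_or_dvd hfa with h1 | h1
      · rwa [key f hm hf h1]
      · exact ha f hm hf h1

/-- A monic irreducible polynomial dividing `(X - 1) * q` is `X - 1` or divides `q`. -/
theorem Polynomial.dvd_of_dvd_X_sub_one_mul {f q : F[X]} (hm : f.Monic) (hf : Irreducible f)
    (h : f ∣ (X - 1) * q) (hne : f ≠ X - 1) : f ∣ q := by
  refine (hf.prime.dvd_or_dvd h).resolve_left fun h1 => hne ?_
  rw [← C_1] at h1 ⊢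
  exact eq_of_monic_of_associated hm (monic_X_sub_C 1)
    (hf.associated_of_dvd (irreducible_X_sub_C 1) h1)

end PolynomialFactors

section Endomorphisms

variable {F V : Type*} [Field F] [AddCommGroup V] [Module F V]

/-- An irreducible factor of the characteristic polynomial divides every annihilating
polynomial. -/
theorem LinearMap.dvd_of_irreducible_of_dvd_charpoly [FiniteDimensional F V]
    {φ : Module.End F V} {f q : F[X]} (hf : Irreducible f) (hfc : f ∣ φ.charpoly)
    (hq : aeval φ q = 0) : f ∣ q := by
  have : Fact (Irreducible f) := ⟨hf⟩
  have hroot : (LinearMap.baseChange (AdjoinRoot f) φ).charpoly.IsRoot (AdjoinRoot.root f) := by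
    rw [LinearMap.charpoly_baseChange, IsRoot, eval_map_algebraMap, AdjoinRoot.aeval_eq,
      AdjoinRoot.mk_eq_zero]
    exact hfc
  obtain ⟨v, hv⟩ :=
    ((Module.End.hasEigenvalue_iff_isRoot_charpoly _ _).2 hroot).exists_hasEigenvector
  have h0 : aeval (LinearMap.baseChange (AdjoinRoot f) φ) (q.map (algebraMap F (AdjoinRoot f)))
      = 0 := by
    rw [aeval_map_algebraMap]
    have := aeval_algHom_apply (Module.End.baseChangeHom F (AdjoinRoot f) V) φ q
    rw [hq, map_zero] at this
    exact this
  have h1 := Module.End.aeval_apply_of_hasEigenvector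
    (p := q.map (algebraMap F (AdjoinRoot f))) hv
  rw [h0, LinearMap.zero_apply, eval_map_algebraMap, AdjoinRoot.aeval_eq] at h1
  exact AdjoinRoot.mk_eq_zero.1 ((smul_eq_zero.1 h1.symm).resolve_right hv.2)

/-- If two endomorphisms agree on a subspace stable under the second one, so do their
polynomials. -/
theorem LinearMap.aeval_apply_eq_of_eqOn {φ ψ : Module.End F V} (W : Submodule F V)
    (h : ∀ v ∈ W, φ v = ψ v) (hW : ∀ v ∈ W, ψ v ∈ W) (p : F[X]) :
    ∀ v ∈ W, aeval φ p v = aeval ψ p v := by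
  induction p using Polynomial.induction_on' with
  | add p q hp hq => intro v hv; simp [hp v hv, hq v hv]
  | monomial n a =>
    intro v hv
    have : (φ ^ n) v = (ψ ^ n) v := by
      induction n generalizing v with
      | zero => rfl
      | succ n ih =>
        rw [pow_succ, pow_succ, Module.End.mul_apply, Module.End.mul_apply, h v hv,
          ih _ (hW v hv)]
    simp [aeval_monomial, this]

/-- A vector killed by two coprime polynomials in an endomorphism is zero. -/
theorem LinearMap.eq_zero_of_isCoprime {φ : Module.End F V} {p q : F[X]} (h : IsCoprime p q)
    {v : V} (hp : aeval φ p v = 0) (hq : aeval φ q v = 0) : v = 0 :=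
  Submodule.disjoint_def.1 (disjoint_ker_aeval_of_isCoprime φ h) v hp hq

end Endomorphisms

section Decomposition

variable {F V : Type} [Field F] [AddCommGroup V] [Module F V] [FiniteDimensional F V] {d : ℕ}

/-- A `d`-decomposition splits every vector into a part killed by a polynomial in `g` whose
monic irreducible factors are different from `X - 1` and have degree divisible by `d`, and a part
killed by a polynomial in `g` with no such factor; `x` acts as `g` on the former and trivially on
the latter. -/
theorem exists_polynomials_of_d_decomposition {g x y : (Module.End F V)ˣ}
    (hx : x ∈ dElements F V d) (hy : y ∈ dRegular F V d x) (hg : g = x * y) :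
    ∃ b a : F[X], b ≠ 0 ∧
      (∀ f : F[X], f.Monic → Irreducible f → f ∣ b → f ≠ X - 1 ∧ d ∣ f.natDegree) ∧
      (∀ f : F[X], f.Monic → Irreducible f → f ∣ a → ¬ (f ≠ X - 1 ∧ d ∣ f.natDegree)) ∧
      ∀ v : V, ∃ u w : V, v = u + w ∧
        aeval (g : Module.End F V) b u = 0 ∧ aeval (g : Module.End F V) a w = 0 ∧
        (x : Module.End F V) v = (g : Module.End F V) u + w := by
  obtain ⟨hx1, hx2⟩ := hx
  obtain ⟨hy1, hy2, hy3⟩ := hy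
  set n := Module.finrank F V
  set X' : Module.End F V := (x : Module.End F V)
  have hc0 : X'.charpoly ≠ 0 := X'.charpoly_monic.ne_zero
  obtain ⟨b, hcb, hbX⟩ := exists_eq_pow_rootMultiplicity_mul_and_not_dvd X'.charpoly hc0 (1 : F)
  rw [C_1] at hcb hbX
  have hb0 : b ≠ 0 := by
    rintro rfl
    exact hbX (dvd_zero _)
  have hmn : X'.charpoly.rootMultiplicity 1 ≤ n := by
    have h1 := natDegree_le_of_dvd (pow_rootMultiplicity_dvd X'.charpoly 1) hc0
    rwa [natDegree_pow, natDegree_X_sub_C, mul_one, LinearMap.charpoly_natDegree] at h1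
  have hkill : aeval X' ((X - 1) ^ n * b) = 0 := by
    have hdvd : X'.charpoly ∣ (X - 1) ^ n * b := by
      rw [hcb]
      exact mul_dvd_mul_right (pow_dvd_pow _ hmn) b
    obtain ⟨r, hr⟩ := hdvd
    rw [hr, map_mul, LinearMap.aeval_self_charpoly, zero_mul]
  have hcop : IsCoprime ((X - 1 : F[X]) ^ n) b := by
    rw [← C_1] at hbX ⊢
    exact (((irreducible_X_sub_C (1 : F)).coprime_iff_not_dvd).2 hbX).pow_left
  have hpow : aeval X' ((X - 1 : F[X]) ^ n) = (X' - 1) ^ n := by simp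
  have hgx : ∀ v ∈ primaryRange x, (g : Module.End F V) v = X' v := by
    intro v hv
    rw [hg, Units.val_mul, Module.End.mul_apply, hy1 v hv]
  have hxr : ∀ v ∈ primaryRange x, X' v ∈ primaryRange x := by
    rintro _ ⟨z, rfl⟩
    refine ⟨X' z, ?_⟩
    rw [← Module.End.mul_apply, ← Module.End.mul_apply]
    congr 1
    exact (((Commute.refl X').sub_left (Commute.one_left X')).pow_left n)
  have hgy : ∀ v ∈ primaryKer x, (g : Module.End F V) v = (y : Module.End F V) v := by
    intro v hv
    rw [hg, Units.val_mul, Module.End.mul_apply, hx1 _ (hy2 v hv)]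
  refine ⟨b, (y : Module.End F V).charpoly, hb0, fun f hm hf hfb => ?_, fun f hm hf hfa h => ?_,
    fun v => ?_⟩
  · have hne : f ≠ X - 1 := by
      rintro rfl
      exact hbX hfb
    exact ⟨hne, hx2 f hm hf (hcb ▸ hfb.mul_left _) hne⟩
  · exact hy3 f hm hf hfa h.1 h.2
  · obtain ⟨s, t, hst⟩ := hcop
    have hu : aeval X' (s * (X - 1) ^ n) v ∈ primaryRange x := by
      refine ⟨aeval X' s v, ?_⟩
      rw [mul_comm s, map_mul, hpow, Module.End.mul_apply]
    have hw : aeval X' (t * b) v ∈ primaryKer x := by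
      change ((X' - 1) ^ n) (aeval X' (t * b) v) = 0
      rw [← hpow, ← Module.End.mul_apply, ← map_mul, mul_left_comm, map_mul, hkill, mul_zero,
        LinearMap.zero_apply]
    have hv : v = aeval X' (s * (X - 1) ^ n) v + aeval X' (t * b) v := by
      rw [← LinearMap.add_apply, ← map_add, hst, map_one, Module.End.one_apply]
    refine ⟨_, _, hv, ?_, ?_, ?_⟩
    · rw [LinearMap.aeval_apply_eq_of_eqOn _ hgx hxr b _ hu, ← Module.End.mul_apply, ← map_mul,
        mul_comm b, mul_assoc, map_mul, hkill, mul_zero, LinearMap.zero_apply]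
    · rw [LinearMap.aeval_apply_eq_of_eqOn _ hgy hy2 _ _ hw, LinearMap.aeval_self_charpoly,
        LinearMap.zero_apply]
    · conv_lhs => rw [hv, map_add, hx1 _ hw, ← hgx _ hu]

/-- The `d`-part of a `d`-decomposition is unique. -/
theorem d_part_unique {g x y x' y' : (Module.End F V)ˣ}
    (hx : x ∈ dElements F V d) (hy : y ∈ dRegular F V d x) (hg : g = x * y)
    (hx' : x' ∈ dElements F V d) (hy' : y' ∈ dRegular F V d x') (hg' : g = x' * y') :
    x = x' := by
  obtain ⟨b, a, hb0, hb, ha, h⟩ := exists_polynomials_of_d_decomposition hx hy hg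
  obtain ⟨b', a', hb0', hb', ha', h'⟩ := exists_polynomials_of_d_decomposition hx' hy' hg'
  have hcop : IsCoprime (b * b') (a * a') := by
    refine isCoprime_of_forall_monic_irreducible (P := fun f => f ≠ X - 1 ∧ d ∣ f.natDegree)
      (mul_ne_zero hb0 hb0') (fun f hm hf hfb => ?_) (fun f hm hf hfa => ?_)
    · exact (hf.prime.dvd_or_dvd hfb).elim (hb f hm hf) (hb' f hm hf)
    · exact (hf.prime.dvd_or_dvd hfa).elim (ha f hm hf) (ha' f hm hf)
  refine Units.ext (LinearMap.ext fun v => ?_)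
  obtain ⟨u, w, hv, hu, hw, hxv⟩ := h v
  obtain ⟨u', w', hv', hu', hw', hxv'⟩ := h' v
  have hsum : u - u' = w' - w := by
    rw [sub_eq_sub_iff_add_eq_add, ← hv, hv', add_comm]
  have hzero : u - u' = 0 := by
    refine LinearMap.eq_zero_of_isCoprime (φ := (g : Module.End F V)) hcop ?_ ?_
    · rw [map_sub, map_mul, Module.End.mul_apply _ _ u', hu', ← map_mul, mul_comm, map_mul,
        Module.End.mul_apply, hu, map_zero, map_zero, sub_zero]
    · rw [hsum, map_sub, map_mul, Module.End.mul_apply _ _ w', hw', ← map_mul, mul_comm, map_mul,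
        Module.End.mul_apply, hw, map_zero, map_zero, sub_zero]
  rw [hxv, hxv', sub_eq_zero.1 hzero, sub_eq_zero.1 (hsum.symm.trans hzero)]

/-- Every automorphism of a nonzero finite-dimensional space has a commuting
`d`-decomposition. -/
theorem exists_d_decomposition (hn : 1 ≤ Module.finrank F V) (g : (Module.End F V)ˣ) :
    ∃ x y : (Module.End F V)ˣ, x ∈ dElements F V d ∧ y ∈ dRegular F V d x ∧ g = x * y ∧
      x * y = y * x := by
  set G : Module.End F V := (g : Module.End F V)
  obtain ⟨b, a, hba, hb, ha⟩ := exists_mul_of_monic_irreducible_predicate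
    (fun f : F[X] => f ≠ X - 1 ∧ d ∣ f.natDegree) G.charpoly G.charpoly_monic.ne_zero
  have hb0 : b ≠ 0 := by
    rintro rfl
    exact G.charpoly_monic.ne_zero (by rw [hba, zero_mul])
  have hkill : aeval G (b * a) = 0 := by rw [← hba, LinearMap.aeval_self_charpoly]
  obtain ⟨t, s, hts⟩ := isCoprime_of_forall_monic_irreducible hb0 hb ha
  have hX1b : IsCoprime b (X - 1) := by
    refine isCoprime_of_forall_monic_irreducible hb0 hb fun f hm hf hfX h => h.1 ?_
    rw [← C_1] at hfX ⊢
    exact eq_of_monic_of_associated hm (monic_X_sub_C 1)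
      (hf.associated_of_dvd (irreducible_X_sub_C 1) hfX)
  -- Complementary projections, onto the kernels of `a(g)` and of `b(g)`.
  set E : Module.End F V := aeval G (t * b) with hE
  set E' : Module.End F V := aeval G (s * a) with hE'
  have hsum : E + E' = 1 := by rw [hE, hE', ← map_add, hts, map_one]
  have hcE : G * E = E * G := by
    have h := congrArg (aeval G) (mul_comm X (t * b))
    rwa [map_mul (aeval G) X, map_mul (aeval G) _ X, aeval_X] at h
  have hcE' : G * E' = E' * G := by
    have h := congrArg (aeval G) (mul_comm X (s * a))
    rwa [map_mul (aeval G) X, map_mul (aeval G) _ X, aeval_X] at h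
  have hEE' : E * E' = 0 := by
    rw [hE, hE', ← map_mul, show t * b * (s * a) = (t * s) * (b * a) by ring, map_mul, hkill,
      mul_zero]
  have hE'E : E' * E = 0 := by
    rw [hE, hE', ← map_mul, show s * a * (t * b) = (t * s) * (b * a) by ring, map_mul, hkill,
      mul_zero]
  have hEid : E * E = E := by
    rw [← add_zero (E * E), ← hEE', ← mul_add, hsum, mul_one]
  have hE'id : E' * E' = E' := by
    rw [← add_zero (E' * E'), ← hE'E, ← mul_add, add_comm, hsum, mul_one]
  have haE : aeval G a * E = 0 := by
    rw [hE, ← map_mul, show a * (t * b) = t * (b * a) by ring, map_mul, hkill, mul_zero]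
  have hbE' : aeval G b * E' = 0 := by
    rw [hE', ← map_mul, show b * (s * a) = s * (b * a) by ring, map_mul, hkill, mul_zero]
  have hXY : (E + G * E') * (G * E + E') = G := by
    calc (E + G * E') * (G * E + E') = (E + G * E') * (E * G + E') := by rw [hcE]
      _ = (E * E) * G + E * E' + G * (E' * E) * G + G * (E' * E') := by noncomm_ring
      _ = G * (E + E') := by
        rw [hEid, hEE', hE'E, hE'id, mul_zero, zero_mul, add_zero, add_zero, ← hcE, mul_add]
      _ = G := by rw [hsum, mul_one]
  have hYX : (G * E + E') * (E + G * E') = G := by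
    calc (G * E + E') * (E + G * E') = (G * E + E') * (E + E' * G) := by rw [hcE']
      _ = G * (E * E) + G * (E * E') * G + E' * E + (E' * E') * G := by noncomm_ring
      _ = G * (E + E') := by
        rw [hEid, hEE', hE'E, hE'id, mul_zero, zero_mul, add_zero, add_zero, ← hcE', mul_add]
      _ = G := by rw [hsum, mul_one]
  have hunits : IsUnit (E + G * E') ∧ IsUnit (G * E + E') :=
    (Commute.isUnit_mul_iff (hXY.trans hYX.symm)).1 (by rw [hXY]; exact g.isUnit)
  obtain ⟨⟨x, hx⟩, ⟨y, hy⟩⟩ := hunits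
  have hcomm : x * y = y * x := Units.ext (by rw [Units.val_mul, Units.val_mul, hx, hy, hXY, hYX])
  have hsplit : ∀ v, v = E v + E' v := fun v => by
    rw [← LinearMap.add_apply, hsum, Module.End.one_apply]
  have hxE : ∀ v, E' v = 0 → (x : Module.End F V) v = v := by
    intro v hv
    have h1 : E v + E' v = v := (hsplit v).symm
    rw [hx, LinearMap.add_apply, Module.End.mul_apply, hv, map_zero, add_zero]
    rwa [hv, add_zero] at h1
  have hxE' : ∀ v, E v = 0 → (x : Module.End F V) v = G v := by
    intro v hv
    have h1 : E v + E' v = v := (hsplit v).symm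
    rw [hv, zero_add] at h1
    rw [hx, LinearMap.add_apply, Module.End.mul_apply, hv, h1, zero_add]
  have hyE : ∀ v, E' v = 0 → (y : Module.End F V) v = G v := by
    intro v hv
    have h1 : E v + E' v = v := (hsplit v).symm
    rw [hv, add_zero] at h1
    rw [hy, LinearMap.add_apply, Module.End.mul_apply, hv, h1, add_zero]
  have hyE' : ∀ v, E v = 0 → (y : Module.End F V) v = v := by
    intro v hv
    have h1 : E v + E' v = v := (hsplit v).symm
    rw [hy, LinearMap.add_apply, Module.End.mul_apply, hv, map_zero, zero_add]
    rwa [hv, zero_add] at h1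
  have hGker : ∀ v ∈ LinearMap.ker E, G v ∈ LinearMap.ker E := by
    intro v hv
    rw [LinearMap.mem_ker] at hv ⊢
    rw [← Module.End.mul_apply, ← hcE, Module.End.mul_apply, hv, map_zero]
  have hGker' : ∀ v ∈ LinearMap.ker E', G v ∈ LinearMap.ker E' := by
    intro v hv
    rw [LinearMap.mem_ker] at hv ⊢
    rw [← Module.End.mul_apply, ← hcE', Module.End.mul_apply, hv, map_zero]
  have hmem : ∀ v, E' v ∈ LinearMap.ker E := fun v => by
    rw [LinearMap.mem_ker, ← Module.End.mul_apply, hEE', LinearMap.zero_apply]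
  have hmem' : ∀ v, E v ∈ LinearMap.ker E' := fun v => by
    rw [LinearMap.mem_ker, ← Module.End.mul_apply, hE'E, LinearMap.zero_apply]
  have hxpoly := LinearMap.aeval_apply_eq_of_eqOn (LinearMap.ker E) hxE' hGker
  have hypoly := LinearMap.aeval_apply_eq_of_eqOn (LinearMap.ker E') hyE hGker'
  have hxann : aeval (x : Module.End F V) ((X - 1) * b) = 0 := by
    refine LinearMap.ext fun v => ?_
    have h1 : aeval (x : Module.End F V) ((X - 1) * b) (E v) = 0 := by
      rw [mul_comm, map_mul, Module.End.mul_apply, map_sub, aeval_X, map_one,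
        LinearMap.sub_apply, hxE _ (hmem' v), Module.End.one_apply, sub_self, map_zero]
    have h2 : aeval (x : Module.End F V) ((X - 1) * b) (E' v) = 0 := by
      rw [map_mul, Module.End.mul_apply, hxpoly b _ (hmem v), ← Module.End.mul_apply _ E', hbE',
        LinearMap.zero_apply, map_zero]
    rw [hsplit v, map_add, h1, h2, add_zero, LinearMap.zero_apply]
  have hyann : aeval (y : Module.End F V) ((X - 1) * a) = 0 := by
    refine LinearMap.ext fun v => ?_
    have h1 : aeval (y : Module.End F V) ((X - 1) * a) (E' v) = 0 := by
      rw [mul_comm, map_mul, Module.End.mul_apply, map_sub, aeval_X, map_one,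
        LinearMap.sub_apply, hyE' _ (hmem v), Module.End.one_apply, sub_self, map_zero]
    have h2 : aeval (y : Module.End F V) ((X - 1) * a) (E v) = 0 := by
      rw [map_mul, Module.End.mul_apply, hypoly a _ (hmem' v), ← Module.End.mul_apply _ E, haE,
        LinearMap.zero_apply, map_zero]
    rw [hsplit v, map_add, h1, h2, add_zero, LinearMap.zero_apply]
  refine ⟨x, y, ⟨fun v hv => hxE v ?_, fun f hm hf hfx hne => ?_⟩,
    ⟨fun v hv => hyE' v ?_, fun v hv => ?_, fun f hm hf hfy hne hdf => ?_⟩,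
    Units.ext (by rw [Units.val_mul, hx, hy, hXY]), hcomm⟩
  · have hE'x : E' * (x : Module.End F V) = (x : Module.End F V) * E' := by
      rw [hx, mul_add, add_mul, hE'E, hEE', mul_assoc, hE'id, ← mul_assoc, ← hcE', mul_assoc,
        hE'id]
    refine LinearMap.eq_zero_of_isCoprime (φ := G) (hX1b.pow_right (n := Module.finrank F V)) ?_ ?_
    · rw [← Module.End.mul_apply, hbE', LinearMap.zero_apply]
    · have h1 : E' * ((x : Module.End F V) - 1) ^ Module.finrank F V
          = ((x : Module.End F V) - 1) ^ Module.finrank F V * E' :=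
        ((show Commute E' (x : Module.End F V) from hE'x).sub_right
          (Commute.one_right E')).pow_right _
      rw [← hxpoly _ _ (hmem v), map_pow, map_sub, aeval_X, map_one, ← Module.End.mul_apply, ← h1,
        Module.End.mul_apply, LinearMap.mem_ker.1 hv, map_zero]
  · exact (hb f hm hf (dvd_of_dvd_X_sub_one_mul hm hf
      (LinearMap.dvd_of_irreducible_of_dvd_charpoly hf hfx hxann) hne)).2
  · obtain ⟨w, rfl⟩ := hv
    have h1 : E * ((x : Module.End F V) - 1) = 0 := by
      rw [hx, mul_sub, mul_add, hEid, ← mul_assoc, ← hcE, mul_assoc, hEE', mul_zero, add_zero,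
        mul_one, sub_self]
    obtain ⟨k, hk⟩ := Nat.exists_eq_add_of_le hn
    rw [hk, pow_add, pow_one, ← Module.End.mul_apply, ← mul_assoc, h1, zero_mul,
      LinearMap.zero_apply]
  · have h1 : ((x : Module.End F V) - 1) ^ Module.finrank F V * (y : Module.End F V)
        = (y : Module.End F V) * ((x : Module.End F V) - 1) ^ Module.finrank F V :=
      ((show Commute (x : Module.End F V) (y : Module.End F V) from
        congrArg Units.val hcomm).sub_left (Commute.one_left _)).pow_left _
    change (((x : Module.End F V) - 1) ^ Module.finrank F V) ((y : Module.End F V) v) = 0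
    rw [← Module.End.mul_apply, h1, Module.End.mul_apply, LinearMap.mem_ker.1 hv, map_zero]
  · exact ha f hm hf (dvd_of_dvd_X_sub_one_mul hm hf
      (LinearMap.dvd_of_irreducible_of_dvd_charpoly hf hfy hyann) hne) ⟨hne, hdf⟩

end Decomposition

/-- For `d ≥ 1`, every `g ∈ G = GL(V)` has a unique
`d`-decomposition: there is a unique pair `(x, y)` with `x ∈ 𝒳_d`, `y ∈ 𝒴_d(x)`
and `g = x y`; moreover `x` and `y` commute. -/
theorem d_decomposition_exists_unique
    (F V : Type) [Field F] [Fintype F] [AddCommGroup V] [Module F V]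
    [FiniteDimensional F V] (hn : 1 ≤ Module.finrank F V)
    (d : ℕ) (hd : 1 ≤ d) :
    ∀ g : (Module.End F V)ˣ,
      ∃! p : (Module.End F V)ˣ × (Module.End F V)ˣ,
        p.1 ∈ dElements F V d ∧ p.2 ∈ dRegular F V d p.1 ∧ g = p.1 * p.2 ∧
          p.1 * p.2 = p.2 * p.1 := by
  intro g
  obtain ⟨x, y, hx, hy, hg, hxy⟩ := exists_d_decomposition (d := d) hn g
  refine ⟨(x, y), ⟨hx, hy, hg, hxy⟩, ?_⟩
  rintro ⟨x', y'⟩ ⟨hx', hy', hg', -⟩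
  obtain rfl : x = x' := d_part_unique hx hy hg hx' hy' hg'
  exact Prod.ext rfl (mul_left_cancel (hg'.symm.trans hg))
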